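/- For every integer n, the braid σ₁² σ₂ⁿ ∈ B₃ induces (via the Artin action) an automorphism of the free group F₃ that preserves some bi-ordering of F₃. -/

import Mathlib

open FreeGroup

/-- The Artin action of `σ₁` on `F₃ = ⟨x₁,x₂,x₃⟩` (generators indexed by `Fin 3`):
`x₁ ↦ x₁x₂x₁⁻¹`, `x₂ ↦ x₁`, `x₃ ↦ x₃`. -/
def artinS1 : Monoid.End (FreeGroup (Fin 3)) :=
  FreeGroup.lift fun k =>
    if k = 0 then of 0 * of 1 * (of 0)⁻¹
    else if k = 1 then of 0
    else of 2

/-- The Artin action of `σ₂`: `x₂ ↦ x₂x₃x₂⁻¹`, `x₃ ↦ x₂`, `x₁ ↦ x₁`. -/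
def artinS2 : Monoid.End (FreeGroup (Fin 3)) :=
  FreeGroup.lift fun k =>
    if k = 1 then of 1 * of 2 * (of 1)⁻¹
    else if k = 2 then of 1
    else of 0

/-- The Artin action of `σ₂⁻¹`: `x₂ ↦ x₃`, `x₃ ↦ x₃⁻¹x₂x₃`, `x₁ ↦ x₁`. -/
def artinS2Inv : Monoid.End (FreeGroup (Fin 3)) :=
  FreeGroup.lift fun k =>
    if k = 1 then of 2
    else if k = 2 then (of 2)⁻¹ * of 1 * of 2
    else of 0

/-- The automorphism of `F₃` induced by the braid `σ₁² σ₂ⁿ` (`n ∈ ℤ`): as the Artin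
action is a right action, one first applies `σ₁` twice and then `σ₂` `n` times. -/
def braidAction (n : ℤ) : Monoid.End (FreeGroup (Fin 3)) :=
  (if 0 ≤ n then artinS2 ^ n.toNat else artinS2Inv ^ (-n).toNat) * artinS1 * artinS1

/-!
A bi-ordering preserved by `φ` is the same thing as a positive cone mapped into itself by `φ`.

The Magnus expansion `x_i ↦ 1 + X_i` embeds a free group into the units of the ring of
noncommutative power series, and the sign of the first nonconstant term of the expansion defines a
positive cone. If `ψ` sends each `x_i` to a conjugate of `x_{π i}`, then on the lowest-degree part
of the expansion it acts as the substitution `X_i ↦ X_{π i}`; hence it preserves the cone as soon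
as `π` is strictly increasing.

For even `n` the braid `σ₁² σ₂ⁿ` is pure, so this applies with `π = id`. For odd `n` it fixes the
conjugacy class of `x₁` and exchanges those of `x₂` and `x₃`. The kernel of the exponent sum of
`x₁` is free on the conjugates of `x₂` and `x₃` by powers of `x₁`. Interleaving the two families
gives generators `y_k`, `k ∈ ℤ`, and because `σ₁²` conjugates `x₂` by an element of exponent one,
the braid sends `y_k` to a conjugate of `y_{k + 1}`. So it preserves the Magnus cone of the kernel,
and comparing the exponent of `x₁` first extends this cone to `F₃`.
-/

/-- `P` is the set of elements greater than `1` for some bi-ordering of `G`. -/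
structure IsPositiveCone {G : Type*} [Group G] (P : Set G) : Prop where
  one_notMem : 1 ∉ P
  mul_mem : ∀ {a b : G}, a ∈ P → b ∈ P → a * b ∈ P
  mem_or_inv_mem : ∀ {a : G}, a ≠ 1 → a ∈ P ∨ a⁻¹ ∈ P
  conj_mem : ∀ {a : G} (c : G), a ∈ P → c * a * c⁻¹ ∈ P

namespace IsPositiveCone

variable {G H : Type*} [Group G] [Group H]

lemma inv_notMem {P : Set G} (hP : IsPositiveCone P) {a : G} (ha : a ∈ P) : a⁻¹ ∉ P := fun ha' =>
  hP.one_notMem (mul_inv_cancel a ▸ hP.mul_mem ha ha')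

lemma map_mem_iff {P : Set G} (hP : IsPositiveCone P) {φ : G →* G} (hφ : Set.MapsTo φ P P)
    {a : G} : φ a ∈ P ↔ a ∈ P := by
  refine ⟨fun h => ?_, fun h => hφ h⟩
  have ha : a ≠ 1 := by
    rintro rfl
    exact hP.one_notMem (_root_.map_one φ ▸ h)
  refine (hP.mem_or_inv_mem ha).resolve_right fun hinv => hP.inv_notMem h ?_
  simpa only [_root_.map_inv] using hφ hinv

theorem exists_invariant_biorder {P : Set G} (hP : IsPositiveCone P) {φ : G →* G}
    (hφ : Set.MapsTo φ P P) :
    ∃ lt : G → G → Prop,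
      (∀ a, ¬ lt a a) ∧
      (∀ a b c, lt a b → lt b c → lt a c) ∧
      (∀ a b, a ≠ b → lt a b ∨ lt b a) ∧
      (∀ a b c, lt a b → lt (c * a) (c * b)) ∧
      (∀ a b c, lt a b → lt (a * c) (b * c)) ∧
      (∀ a b, lt a b ↔ lt (φ a) (φ b)) := by
  refine ⟨fun a b => a⁻¹ * b ∈ P, fun a => ?_, fun a b c hab hbc => ?_, fun a b hab => ?_,
    fun a b c hab => ?_, fun a b c hab => ?_, fun a b => ?_⟩
  · simpa only [inv_mul_cancel] using hP.one_notMem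
  · simpa only [mul_assoc, mul_inv_cancel_left] using hP.mul_mem hab hbc
  · simpa only [mul_inv_rev, inv_inv] using
      hP.mem_or_inv_mem (a := a⁻¹ * b) (fun h => hab (inv_mul_eq_one.1 h))
  · simpa only [mul_inv_rev, mul_assoc, inv_mul_cancel_left] using hab
  · simpa only [mul_inv_rev, mul_assoc, inv_inv] using hP.conj_mem c⁻¹ hab
  · simp only [← _root_.map_inv, ← _root_.map_mul, hP.map_mem_iff hφ]

lemma comap {P : Set H} (hP : IsPositiveCone P) {f : G →* H} (hf : Function.Injective f) :
    IsPositiveCone (f ⁻¹' P) where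
  one_notMem h := hP.one_notMem (by simpa using h)
  mul_mem ha hb := by simpa using hP.mul_mem ha hb
  mem_or_inv_mem {a} ha := by
    simpa using hP.mem_or_inv_mem (a := f a) ((map_ne_one_iff f hf).2 ha)
  conj_mem c ha := by simpa using hP.conj_mem (f c) ha

end IsPositiveCone

lemma isPositiveCone_Ioi_one {G : Type*} [CommGroup G] [LinearOrder G] [IsOrderedMonoid G] :
    IsPositiveCone (Set.Ioi (1 : G)) where
  one_notMem := lt_irrefl 1
  mul_mem ha hb := one_lt_mul'' ha hb
  mem_or_inv_mem ha := by simpa using ha.lt_or_gt.symm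
  conj_mem c ha := by simpa using ha

section SemidirectProduct

variable {G N : Type*} [Group G] [Group N] {α : G →* MulAut N} {P : Set N} {Q : Set G}

/-- The lexicographic combination of a cone `Q` on the quotient `G` and a cone `P` on the normal
subgroup `N` of `N ⋊[α] G`; the `G`-component is compared first. -/
def semidirectLexCone (α : G →* MulAut N) (P : Set N) (Q : Set G) : Set (N ⋊[α] G) :=
  {x | x.right ∈ Q ∨ x.right = 1 ∧ x.left ∈ P}

lemma semidirect_eq_inl_left {x : N ⋊[α] G} (hx : x.right = 1) : x = .inl x.left := by
  ext <;> simp [hx]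

lemma semidirect_conj_inl (x : N ⋊[α] G) (a : N) :
    x * .inl a * x⁻¹ = .inl (x.left * α x.right a * x.left⁻¹) := by
  ext <;> simp

theorem isPositiveCone_semidirectLexCone (hP : IsPositiveCone P) (hQ : IsPositiveCone Q)
    (hα : ∀ g, Set.MapsTo (α g) P P) : IsPositiveCone (semidirectLexCone α P Q) where
  one_notMem := by
    rintro (h | ⟨-, h⟩)
    exacts [hQ.one_notMem h, hP.one_notMem h]
  mul_mem := by
    rintro x y (hx | ⟨hx, hx'⟩) (hy | ⟨hy, hy'⟩)
    · exact Or.inl (hQ.mul_mem hx hy)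
    · exact Or.inl (by simpa [hy] using hx)
    · exact Or.inl (by simpa [hx] using hy)
    · exact Or.inr ⟨by simp [hx, hy], by simpa [hx] using hP.mul_mem hx' hy'⟩
  mem_or_inv_mem {x} hx := by
    by_cases hright : x.right = 1
    · have hleft : x.left ≠ 1 := fun h => hx (SemidirectProduct.ext h hright)
      refine (hP.mem_or_inv_mem hleft).imp (fun h => Or.inr ⟨hright, h⟩) fun h => Or.inr ?_
      simpa [hright] using h
    · exact (hQ.mem_or_inv_mem hright).imp Or.inl Or.inl
  conj_mem := by
    rintro x c (hx | ⟨hx, hx'⟩)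
    · exact Or.inl (hQ.conj_mem c.right hx)
    · rw [semidirect_eq_inl_left hx, semidirect_conj_inl]
      exact Or.inr ⟨rfl, hP.conj_mem _ (hα _ hx')⟩

lemma mapsTo_semidirectLexCone {Φ : N ⋊[α] G →* N ⋊[α] G} {ψ : N →* N}
    (hright : ∀ x, (Φ x).right = x.right) (hleft : ∀ a, Φ (.inl a) = .inl (ψ a))
    (hψ : Set.MapsTo ψ P P) :
    Set.MapsTo Φ (semidirectLexCone α P Q) (semidirectLexCone α P Q) := by
  rintro x (hx | ⟨hx, hx'⟩)
  · exact Or.inl (by rwa [hright])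
  · rw [semidirect_eq_inl_left hx, hleft]
    exact Or.inr ⟨rfl, hψ hx'⟩

end SemidirectProduct

/-- Noncommutative formal power series over `ℤ` in variables indexed by `I`, given by the
coefficients of the words in the variables. -/
abbrev MagnusSeries (I : Type*) := List I → ℤ

/-- The ring of additive operators on series. Since a series acts on all series by left
multiplication, products and inverses of series are formed in this ring. -/
abbrev SeriesEnd (I : Type*) := Module.End ℤ (MagnusSeries I)

namespace MagnusSeries

section Filtration

variable {I : Type*}

/-- The series all of whose terms have degree at least `n`. -/
def orderGE (I : Type*) (n : ℕ) : Submodule ℤ (MagnusSeries I) where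
  carrier := {f | ∀ w : List I, w.length < n → f w = 0}
  add_mem' hf hg w hw := by simp [hf w hw, hg w hw]
  zero_mem' _ _ := rfl
  smul_mem' c f hf w hw := by simp [hf w hw]

/-- The operators on series that increase the order by at least `n`. -/
def raising (I : Type*) (n : ℕ) : Submodule ℤ (SeriesEnd I) where
  carrier := {T | ∀ m, ∀ f ∈ orderGE I m, T f ∈ orderGE I (m + n)}
  add_mem' hS hT m f hf := add_mem (hS m f hf) (hT m f hf)
  zero_mem' _ _ _ := zero_mem _
  smul_mem' c _ hT m f hf := (orderGE I _).smul_mem c (hT m f hf)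

lemma mem_orderGE_zero (f : MagnusSeries I) : f ∈ orderGE I 0 := fun _ hw => absurd hw (by simp)

lemma apply_mem_orderGE {n : ℕ} {T : SeriesEnd I} (hT : T ∈ raising I n)
    (f : MagnusSeries I) : T f ∈ orderGE I n := by
  simpa only [zero_add] using hT 0 f (mem_orderGE_zero f)

lemma raising_antitone : Antitone (raising I) := fun a b hab _ hT m f hf w hw =>
  hT m f hf w (hw.trans_le (by gcongr))

lemma one_mem_raising_zero : (1 : SeriesEnd I) ∈ raising I 0 :=
  fun _ _ hf => hf

lemma mul_mem_raising {a b : ℕ} {S T : SeriesEnd I} (hS : S ∈ raising I a)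
    (hT : T ∈ raising I b) : S * T ∈ raising I (a + b) := fun m f hf => by
  rw [add_comm a b, ← add_assoc]
  exact hS _ _ (hT m f hf)

lemma pow_mem_raising {T : SeriesEnd I} (hT : T ∈ raising I 1) (n : ℕ) :
    T ^ n ∈ raising I n := by
  induction n with
  | zero => simpa using one_mem_raising_zero
  | succ n ih => exact pow_succ T n ▸ mul_mem_raising ih hT

lemma listProd_mem_raising {ι : Type*} {Y : ι → SeriesEnd I}
    (hY : ∀ i, Y i ∈ raising I 1) (w : List ι) : (w.map Y).prod ∈ raising I w.length := by
  induction w with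
  | nil => exact one_mem_raising_zero
  | cons i w ih =>
    rw [List.map_cons, List.prod_cons, List.length_cons, add_comm]
    exact mul_mem_raising (hY i) ih

lemma listProd_sub_listProd_mem_raising {ι : Type*} {Y Z : ι → SeriesEnd I}
    (hY : ∀ i, Y i ∈ raising I 1) (hZ : ∀ i, Z i ∈ raising I 1)
    (hYZ : ∀ i, Y i - Z i ∈ raising I 2) (w : List ι) :
    (w.map Y).prod - (w.map Z).prod ∈ raising I (w.length + 1) := by
  induction w with
  | nil => simp
  | cons i w ih =>
    have hsplit : ((i :: w).map Y).prod - ((i :: w).map Z).prod =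
        (Y i - Z i) * (w.map Y).prod + Z i * ((w.map Y).prod - (w.map Z).prod) := by
      simp only [List.map_cons, List.prod_cons]
      noncomm_ring
    rw [hsplit, List.length_cons]
    exact add_mem
      (raising_antitone (by omega) (mul_mem_raising (hYZ i) (listProd_mem_raising hY w)))
      (raising_antitone (by omega) (mul_mem_raising (hZ i) ih))

lemma mul_sub_mul_mem_raising {n : ℕ} {S S' T T' : SeriesEnd I}
    (hT : T ∈ raising I 0) (hS' : S' ∈ raising I 0) (hS : S - S' ∈ raising I n)
    (hT' : T - T' ∈ raising I n) : S * T - S' * T' ∈ raising I n := by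
  have hsplit : S * T - S' * T' = (S - S') * T + S' * (T - T') := by noncomm_ring
  rw [hsplit]
  exact add_mem (mul_mem_raising hS hT) (by simpa using mul_mem_raising hS' hT')

lemma mem_raising_zero_of_sub_one_mem {T : SeriesEnd I}
    (hT : T - 1 ∈ raising I 1) : T ∈ raising I 0 := by
  simpa using add_mem (raising_antitone zero_le_one hT) one_mem_raising_zero

/- If `T = 1 + N` then `T⁻¹ f = f - N (T⁻¹ f)`, and the order of the right-hand side is controlled
by the order of `f` and one less than the order of `T⁻¹ f`. -/
lemma inv_mem_raising_zero {T : (SeriesEnd I)ˣ}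
    (hT : (T : SeriesEnd I) - 1 ∈ raising I 1) :
    (↑T⁻¹ : SeriesEnd I) ∈ raising I 0 := by
  intro m f hf
  have hfix : (↑T⁻¹ : SeriesEnd I) f =
      f - ((T : SeriesEnd I) - 1) ((↑T⁻¹ : SeriesEnd I) f) := by
    rw [LinearMap.sub_apply, ← Module.End.mul_apply, T.mul_inv]
    simp
  suffices h : ∀ k ≤ m, (↑T⁻¹ : SeriesEnd I) f ∈ orderGE I k from h m le_rfl
  intro k
  induction k with
  | zero => exact fun _ => mem_orderGE_zero _
  | succ k ih =>
    intro hk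
    rw [hfix]
    exact sub_mem (fun w hw => hf w (hw.trans_le hk)) (hT k _ (ih (by omega)))

/-- The group of invertible operators congruent to `1` modulo operators increasing the order. -/
def unipotent (I : Type*) : Subgroup (SeriesEnd I)ˣ where
  carrier := {T | (T : SeriesEnd I) - 1 ∈ raising I 1}
  one_mem' := by simp
  mul_mem' {S T} hS hT := by
    have hsplit : ((S * T : (SeriesEnd I)ˣ) : SeriesEnd I) - 1 =
        (S - 1) * T + (T - 1) := by
      rw [Units.val_mul]
      noncomm_ring
    rw [Set.mem_ofPred_eq, hsplit]
    exact add_mem (mul_mem_raising hS (mem_raising_zero_of_sub_one_mem hT)) hT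
  inv_mem' {T} hT := by
    have hsplit : (↑T⁻¹ : SeriesEnd I) - 1 = -(↑T⁻¹ * (T - 1)) := by
      rw [mul_sub, T.inv_mul]
      noncomm_ring
    rw [Set.mem_ofPred_eq, hsplit]
    exact neg_mem (by simpa using mul_mem_raising (inv_mem_raising_zero hT) hT)

lemma mem_unipotent {T : (SeriesEnd I)ˣ} :
    T ∈ unipotent I ↔ (T : SeriesEnd I) - 1 ∈ raising I 1 := Iff.rfl

lemma unipotent_mem_raising_zero {T : (SeriesEnd I)ˣ} (hT : T ∈ unipotent I) :
    (T : SeriesEnd I) ∈ raising I 0 := mem_raising_zero_of_sub_one_mem hT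

lemma inv_sub_geom_sum_mem_raising {T : (SeriesEnd I)ˣ} (hT : T ∈ unipotent I)
    (n : ℕ) : (↑T⁻¹ : SeriesEnd I) -
      ∑ k ∈ Finset.range n, (-((T : SeriesEnd I) - 1)) ^ k ∈ raising I n := by
  set N : SeriesEnd I := T - 1 with hN
  have hgeom : T * ∑ k ∈ Finset.range n, (-N) ^ k = 1 - (-N) ^ n := by
    rw [← mul_neg_geom_sum, hN]
    congr 1
    abel
  have hdiff : (↑T⁻¹ : SeriesEnd I) - ∑ k ∈ Finset.range n, (-N) ^ k =
      ↑T⁻¹ * (-N) ^ n := by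
    rw [← T.inv_mul_cancel_left (∑ k ∈ Finset.range n, (-N) ^ k), hgeom]
    noncomm_ring
  rw [hdiff]
  simpa only [zero_add] using
    mul_mem_raising (inv_mem_raising_zero hT) (pow_mem_raising (neg_mem hT) n)

end Filtration

section MagnusRepresentation

variable {I : Type*} [DecidableEq I]

/-- Left multiplication by the variable `X_i`. -/
def mulVar (i : I) : SeriesEnd I where
  toFun f
    | [] => 0
    | j :: w => if j = i then f w else 0
  map_add' f g := by
    ext (_ | ⟨j, w⟩)
    · rfl
    · by_cases h : j = i <;> simp [h]
  map_smul' c f := by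
    ext (_ | ⟨j, w⟩)
    · simp
    · by_cases h : j = i <;> simp [h]

@[simp] lemma mulVar_nil (i : I) (f : MagnusSeries I) : mulVar i f [] = 0 := rfl

@[simp] lemma mulVar_cons (i j : I) (f : MagnusSeries I) (w : List I) :
    mulVar i f (j :: w) = if j = i then f w else 0 := rfl

lemma mulVar_mem_raising (i : I) : mulVar i ∈ raising I 1 := by
  rintro m f hf (_ | ⟨j, w⟩) hw
  · rfl
  · have hfw : f w = 0 := hf w (by simpa using hw)
    simp [hfw]

/-- Left multiplication by the inverse of the series `1 + X_i`. -/
def invOneAddVar (i : I) : SeriesEnd I where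
  toFun f := List.rec (f []) fun j w fw => f (j :: w) - if j = i then fw else 0
  map_add' f g := by
    ext w
    induction w with
    | nil => rfl
    | cons j w ih =>
      simp only [Pi.add_apply] at ih ⊢
      rw [ih]
      split_ifs <;> ring
  map_smul' c f := by
    ext w
    induction w with
    | nil => rfl
    | cons j w ih =>
      simp only [Pi.smul_apply, smul_eq_mul, RingHom.id_apply] at ih ⊢
      rw [ih]
      split_ifs <;> ring

@[simp] lemma invOneAddVar_nil (i : I) (f : MagnusSeries I) : invOneAddVar i f [] = f [] := rfl

@[simp] lemma invOneAddVar_cons (i j : I) (f : MagnusSeries I) (w : List I) :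
    invOneAddVar i f (j :: w) = f (j :: w) - if j = i then invOneAddVar i f w else 0 := rfl

/-- Left multiplication by the invertible series `1 + X_i`. -/
def oneAddVar (i : I) : (SeriesEnd I)ˣ where
  val := 1 + mulVar i
  inv := invOneAddVar i
  val_inv := by
    ext f (_ | ⟨j, w⟩) <;> simp
  inv_val := by
    ext f w
    induction w with
    | nil => simp
    | cons j w ih =>
      simp only [Module.End.mul_apply, Module.End.one_apply] at ih ⊢
      rw [invOneAddVar_cons, ih]
      simp

lemma val_oneAddVar (i : I) : (oneAddVar i : SeriesEnd I) = 1 + mulVar i := rfl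

/-- The Magnus representation: a free generator `x_i` acts as multiplication by `1 + X_i`. -/
def magnus : FreeGroup I →* (SeriesEnd I)ˣ := FreeGroup.lift oneAddVar

lemma magnus_of (i : I) : magnus (of i) = oneAddVar i := FreeGroup.lift_apply_of

lemma val_magnus_of (i : I) : (magnus (of i) : SeriesEnd I) = 1 + mulVar i := by
  rw [magnus_of, val_oneAddVar]

lemma magnus_mem_unipotent (g : FreeGroup I) : magnus g ∈ unipotent I := by
  have hrange : (magnus (I := I)).range ≤ unipotent I := by
    refine FreeGroup.range_lift_le ?_
    rintro _ ⟨i, rfl⟩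
    rw [SetLike.mem_coe, mem_unipotent, val_oneAddVar, add_sub_cancel_left]
    exact mulVar_mem_raising i
  exact hrange ⟨g, rfl⟩

lemma magnus_conj_of_sub_mem_raising (c : FreeGroup I) (k : I) :
    (magnus (c * of k * c⁻¹) : SeriesEnd I) - magnus (of k) ∈ raising I 2 := by
  set C : SeriesEnd I := ↑(magnus c) with hC
  set C' : SeriesEnd I := ↑(magnus c⁻¹) with hC'
  have hinv : C * C' = 1 := by
    rw [hC, hC', ← Units.val_mul, ← _root_.map_mul, mul_inv_cancel, _root_.map_one, Units.val_one]
  have hsplit : (magnus (c * of k * c⁻¹) : SeriesEnd I) - magnus (of k) =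
      (C - 1) * (mulVar k * C') + mulVar k * (C' - 1) :=
    calc (magnus (c * of k * c⁻¹) : SeriesEnd I) - magnus (of k)
        = C * (1 + mulVar k) * C' - (1 + mulVar k) := by
          rw [_root_.map_mul, _root_.map_mul, Units.val_mul, Units.val_mul, val_magnus_of]
      _ = C * C' - 1 + (C * mulVar k * C' - mulVar k) := by noncomm_ring
      _ = (C - 1) * (mulVar k * C') + mulVar k * (C' - 1) := by
          rw [hinv]
          noncomm_ring
  rw [hsplit]
  have hC'_mem : C' ∈ raising I 0 := unipotent_mem_raising_zero (magnus_mem_unipotent _)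
  exact add_mem
    (mul_mem_raising (magnus_mem_unipotent c) (mul_mem_raising (mulVar_mem_raising k) hC'_mem))
    (mul_mem_raising (mulVar_mem_raising k) (magnus_mem_unipotent _))

/-- The Magnus expansion of `g` minus its constant term `1`. The expansion is recovered from the
operator `magnus g` by applying it to the series `1 = Pi.single [] 1`. -/
def magnusCoeff (g : FreeGroup I) : MagnusSeries I :=
  (magnus g : SeriesEnd I) (Pi.single [] 1) - Pi.single [] 1

lemma magnusCoeff_one : magnusCoeff (1 : FreeGroup I) = 0 := by
  simp [magnusCoeff]

lemma magnusCoeff_mul (g h : FreeGroup I) :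
    magnusCoeff (g * h) = magnusCoeff g + (magnus g : SeriesEnd I) (magnusCoeff h) := by
  simp [magnusCoeff]

lemma listProd_mulVar_single_nil (w v : List I) :
    (w.map mulVar).prod (Pi.single [] 1) v = if v = w then 1 else 0 := by
  induction w generalizing v with
  | nil => simp [Pi.single_apply]
  | cons i w ih =>
    cases v with
    | nil => simp
    | cons j v => by_cases h : j = i <;> simp [ih, h]

end MagnusRepresentation

section PolynomialApproximation

variable {I ι : Type*}

/-- Evaluation of a noncommutative polynomial at a family of operators. -/
noncomputable def polyEval (Y : ι → SeriesEnd I) :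
    MonoidAlgebra ℤ (FreeMonoid ι) →ₐ[ℤ] SeriesEnd I :=
  MonoidAlgebra.lift ℤ (SeriesEnd I) (FreeMonoid ι) (FreeMonoid.lift Y)

lemma polyEval_apply (Y : ι → SeriesEnd I) (p : MonoidAlgebra ℤ (FreeMonoid ι)) :
    polyEval Y p = p.coeff.sum fun w c => c • (w.toList.map Y).prod := by
  rw [polyEval, MonoidAlgebra.lift_apply]
  simp only [FreeMonoid.lift_apply]

lemma polyEval_of (Y : ι → SeriesEnd I) (i : ι) :
    polyEval Y (MonoidAlgebra.of ℤ _ (FreeMonoid.of i)) = Y i := by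
  rw [polyEval, MonoidAlgebra.lift_of, FreeMonoid.lift_eval_of]

lemma polyEval_mem_raising_zero {Y : ι → SeriesEnd I} (hY : ∀ i, Y i ∈ raising I 1)
    (p : MonoidAlgebra ℤ (FreeMonoid ι)) : polyEval Y p ∈ raising I 0 := by
  rw [polyEval_apply]
  exact Submodule.sum_mem _ fun w _ => Submodule.smul_mem _ _
    (raising_antitone (Nat.zero_le _) (listProd_mem_raising hY _))

lemma polyEval_mulVar_single_nil [DecidableEq I] (p : MonoidAlgebra ℤ (FreeMonoid I))
    (w : List I) : polyEval mulVar p (Pi.single [] 1) w = p.coeff (FreeMonoid.ofList w) := by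
  rw [polyEval_apply, Finsupp.sum, LinearMap.sum_apply, Finset.sum_apply]
  simp only [LinearMap.smul_apply, Pi.smul_apply, listProd_mulVar_single_nil, smul_eq_mul, mul_ite,
    mul_one, mul_zero]
  rw [Finset.sum_eq_single (FreeMonoid.ofList w)]
  · simp
  · intro v _ hv
    exact if_neg fun h : w = v.toList => hv (h ▸ rfl)
  · intro hw
    simpa using hw

theorem exists_polyEval_approx (g : FreeGroup ι) (n : ℕ) :
    ∃ p : MonoidAlgebra ℤ (FreeMonoid ι), ∀ ρ : FreeGroup ι →* (SeriesEnd I)ˣ,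
      (∀ h, ρ h ∈ unipotent I) →
        (ρ g : SeriesEnd I) - polyEval (fun i => (ρ (of i) : SeriesEnd I) - 1) p ∈ raising I n := by
  induction g using FreeGroup.induction_on with
  | C1 => exact ⟨1, fun ρ _ => by simp⟩
  | of i =>
    refine ⟨1 + MonoidAlgebra.of ℤ _ (FreeMonoid.of i), fun ρ _ => ?_⟩
    rw [map_add, _root_.map_one, polyEval_of, add_sub_cancel, sub_self]
    exact zero_mem _
  | inv_of i _ =>
    refine ⟨∑ k ∈ Finset.range n, (-MonoidAlgebra.of ℤ _ (FreeMonoid.of i)) ^ k, fun ρ hρ => ?_⟩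
    simp only [map_sum, map_pow, map_neg, polyEval_of, _root_.map_inv]
    exact inv_sub_geom_sum_mem_raising (hρ (of i)) n
  | mul g h hg hh =>
    obtain ⟨p, hp⟩ := hg
    obtain ⟨q, hq⟩ := hh
    refine ⟨p * q, fun ρ hρ => ?_⟩
    rw [_root_.map_mul, _root_.map_mul, Units.val_mul]
    exact mul_sub_mul_mem_raising (unipotent_mem_raising_zero (hρ h))
      (polyEval_mem_raising_zero (fun i => hρ (of i)) p) (hp ρ hρ) (hq ρ hρ)

variable [DecidableEq I]

theorem exists_polyEval_approx_sub_one (g : FreeGroup I) (n : ℕ) :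
    ∃ p : MonoidAlgebra ℤ (FreeMonoid I),
      (∀ w : List I, w.length < n → p.coeff (FreeMonoid.ofList w) = magnusCoeff g w) ∧
      ∀ ρ : FreeGroup I →* (SeriesEnd I)ˣ, (∀ h, ρ h ∈ unipotent I) →
        (ρ g : SeriesEnd I) - 1 - polyEval (fun i => (ρ (of i) : SeriesEnd I) - 1) p ∈
          raising I n := by
  obtain ⟨q, hq⟩ := exists_polyEval_approx (I := I) g n
  have happrox : ∀ ρ : FreeGroup I →* (SeriesEnd I)ˣ, (∀ h, ρ h ∈ unipotent I) →
      (ρ g : SeriesEnd I) - 1 - polyEval (fun i => (ρ (of i) : SeriesEnd I) - 1) (q - 1) ∈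
        raising I n := fun ρ hρ => by
    rw [map_sub, _root_.map_one, sub_sub_sub_cancel_right]
    exact hq ρ hρ
  refine ⟨q - 1, fun w hw => ?_, happrox⟩
  have hmagnus := apply_mem_orderGE (happrox magnus magnus_mem_unipotent) (Pi.single [] 1) w hw
  simp only [val_magnus_of, add_sub_cancel_left, LinearMap.sub_apply, Module.End.one_apply,
    Pi.sub_apply, polyEval_mulVar_single_nil] at hmagnus
  exact (sub_eq_zero.1 hmagnus).symm

lemma finite_magnusCoeff_support (g : FreeGroup I) (n : ℕ) :
    {w : List I | w.length < n ∧ magnusCoeff g w ≠ 0}.Finite := by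
  obtain ⟨p, hp, -⟩ := exists_polyEval_approx_sub_one g n
  refine (p.coeff.support.finite_toSet.image FreeMonoid.toList).subset fun w hw => ?_
  exact ⟨FreeMonoid.ofList w, by simpa [hp w hw.1] using hw.2, rfl⟩

/- Both `ρ g - 1` and `ρ' g - 1` are approximated by the same polynomial, which has no terms of
degree less than `n`. -/
theorem sub_mem_raising_of_magnusCoeff_mem_orderGE {ρ ρ' : FreeGroup I →* (SeriesEnd I)ˣ}
    (hρ : ∀ h, ρ h ∈ unipotent I) (hρ' : ∀ h, ρ' h ∈ unipotent I)
    (hof : ∀ i, (ρ (of i) : SeriesEnd I) - ρ' (of i) ∈ raising I 2) {g : FreeGroup I} {n : ℕ}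
    (hg : magnusCoeff g ∈ orderGE I n) : (ρ g : SeriesEnd I) - ρ' g ∈ raising I (n + 1) := by
  obtain ⟨p, hcoeff, happrox⟩ := exists_polyEval_approx_sub_one g (n + 1)
  set Y : I → SeriesEnd I := fun i => (ρ (of i) : SeriesEnd I) - 1
  set Z : I → SeriesEnd I := fun i => (ρ' (of i) : SeriesEnd I) - 1
  have hYZ : ∀ i, Y i - Z i ∈ raising I 2 := fun i => by
    simpa only [Y, Z, sub_sub_sub_cancel_right] using hof i
  have hpoly : polyEval Y p - polyEval Z p ∈ raising I (n + 1) := by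
    simp only [polyEval_apply, Finsupp.sum, ← Finset.sum_sub_distrib, ← smul_sub]
    refine Submodule.sum_mem _ fun w hw => Submodule.smul_mem _ _ ?_
    have hlength : n ≤ w.toList.length := by
      by_contra! hlt
      exact Finsupp.mem_support_iff.1 hw ((hcoeff w.toList (by omega)).trans (hg _ hlt))
    exact raising_antitone (by omega)
      (listProd_sub_listProd_mem_raising (fun i => hρ (of i)) (fun i => hρ' (of i)) hYZ _)
  have hsplit : (ρ g : SeriesEnd I) - ρ' g = (ρ g - 1 - polyEval Y p) -
      (ρ' g - 1 - polyEval Z p) + (polyEval Y p - polyEval Z p) := by abel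
  rw [hsplit]
  exact add_mem (sub_mem (happrox ρ hρ) (happrox ρ' hρ')) hpoly

end PolynomialApproximation

section Relabel

variable {I J : Type*} {π : I → J}

/-- Substitution of the variable `X_{π i}` for `X_i` in a series, for injective `π`. -/
noncomputable def relabel (π : I → J) : MagnusSeries I →ₗ[ℤ] MagnusSeries J :=
  Function.ExtendByZero.linearMap ℤ (List.map π)

lemma relabel_apply_map (hπ : π.Injective) (f : MagnusSeries I) (w : List I) :
    relabel π f (w.map π) = f w :=
  (List.map_injective_iff.2 hπ).extend_apply f 0 w

lemma relabel_apply_of_notMem {v : List J} (hv : v ∉ Set.range (List.map π))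
    (f : MagnusSeries I) : relabel π f v = 0 :=
  Function.extend_apply' f (0 : MagnusSeries J) v hv

variable [DecidableEq I] [DecidableEq J]

lemma relabel_mulVar (hπ : π.Injective) (i : I) (f : MagnusSeries I) :
    relabel π (mulVar i f) = mulVar (π i) (relabel π f) := by
  ext v
  by_cases hv : v ∈ Set.range (List.map π)
  · obtain ⟨_ | ⟨j, w⟩, rfl⟩ := hv
    · exact relabel_apply_map hπ (mulVar i f) []
    · rw [relabel_apply_map hπ, List.map_cons, mulVar_cons, mulVar_cons, relabel_apply_map hπ]
      simp only [hπ.eq_iff]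
  · rw [relabel_apply_of_notMem hv]
    rcases v with _ | ⟨j, v⟩
    · rfl
    · rw [mulVar_cons, eq_comm, ite_eq_right_iff]
      rintro rfl
      refine relabel_apply_of_notMem ?_ f
      rintro ⟨w, rfl⟩
      exact hv ⟨i :: w, rfl⟩

lemma relabel_magnus (hπ : π.Injective) (g : FreeGroup I) (f : MagnusSeries I) :
    relabel π ((magnus g : SeriesEnd I) f) =
      (magnus (FreeGroup.map π g) : SeriesEnd J) (relabel π f) := by
  induction g using FreeGroup.induction_on generalizing f with
  | C1 => simp
  | of i => simp [val_magnus_of, relabel_mulVar hπ]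
  | inv_of i hi =>
    have hcancel : (magnus (FreeGroup.map π (of i)) : SeriesEnd J)
        (relabel π ((magnus (of i)⁻¹ : SeriesEnd I) f)) = relabel π f := by
      rw [← hi, ← Module.End.mul_apply, ← Units.val_mul, ← _root_.map_mul, mul_inv_cancel,
        _root_.map_one, Units.val_one, Module.End.one_apply]
    rw [← hcancel, ← Module.End.mul_apply, ← Units.val_mul, ← _root_.map_mul, ← _root_.map_mul,
      inv_mul_cancel, _root_.map_one, _root_.map_one, Units.val_one, Module.End.one_apply]
  | mul g h hg hh => simp [hg, hh]

lemma relabel_single_nil (hπ : π.Injective) :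
    relabel π (Pi.single [] 1) = Pi.single [] 1 := by
  ext v
  by_cases hv : v ∈ Set.range (List.map π)
  · obtain ⟨w, rfl⟩ := hv
    simp [relabel_apply_map hπ, Pi.single_apply]
  · have hv_ne : v ≠ [] := by
      rintro rfl
      exact hv ⟨[], rfl⟩
    rw [relabel_apply_of_notMem hv, Pi.single_eq_of_ne hv_ne]

theorem magnusCoeff_map (hπ : π.Injective) (g : FreeGroup I) :
    magnusCoeff (FreeGroup.map π g) = relabel π (magnusCoeff g) := by
  rw [magnusCoeff, magnusCoeff, map_sub, relabel_magnus hπ, relabel_single_nil hπ]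

end Relabel

section MagnusCoeffCongr

variable {I : Type*} [DecidableEq I]

theorem magnusCoeff_map_conj_sub_mem_orderGE {ψ : FreeGroup I →* FreeGroup I} {π : I → I}
    (hψ : ∀ i, IsConj (of (π i)) (ψ (of i))) (hπ : π.Injective) {g : FreeGroup I} {n : ℕ}
    (hg : magnusCoeff g ∈ orderGE I n) :
    magnusCoeff (ψ g) - relabel π (magnusCoeff g) ∈ orderGE I (n + 1) := by
  have hof : ∀ i, (magnus.comp ψ (of i) : SeriesEnd I) - magnus.comp (FreeGroup.map π) (of i) ∈
      raising I 2 := fun i => by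
    obtain ⟨c, hc⟩ := isConj_iff.1 (hψ i)
    simpa only [MonoidHom.comp_apply, ← hc, FreeGroup.map.of] using
      magnus_conj_of_sub_mem_raising c (π i)
  have hdiff := sub_mem_raising_of_magnusCoeff_mem_orderGE
    (fun h => magnus_mem_unipotent (ψ h)) (fun h => magnus_mem_unipotent (FreeGroup.map π h)) hof hg
  rw [← magnusCoeff_map hπ, magnusCoeff, magnusCoeff, sub_sub_sub_cancel_right]
  exact apply_mem_orderGE hdiff (Pi.single [] 1)

end MagnusCoeffCongr

section Faithful

variable {I : Type*}

/-- Among the words without equal adjacent letters that occur in `f`, the longest ones exist and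
all have first letter `o`, where `o = none` stands for the empty word. Multiplication by a nonzero
power of `1 + X_j` with `o ≠ some j` puts `X_j` in front of them, so the series of a nontrivial
reduced word is not `1`. -/
def LeadsWith (o : Option I) (f : MagnusSeries I) : Prop :=
  ∃ w : List I, w.IsChain (· ≠ ·) ∧ w.head? = o ∧ f w ≠ 0 ∧
    ∀ v : List I, v.IsChain (· ≠ ·) → w.length ≤ v.length → f v ≠ 0 →
      v.length = w.length ∧ v.head? = o

lemma LeadsWith.unique {o o' : Option I} {f : MagnusSeries I} (h : LeadsWith o f)
    (h' : LeadsWith o' f) : o = o' := by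
  obtain ⟨w, hw, rfl, hfw, hmax⟩ := h
  obtain ⟨w', hw', rfl, hfw', hmax'⟩ := h'
  rcases le_total w.length w'.length with hle | hle
  · exact (hmax w' hw' hle hfw').2.symm
  · exact (hmax' w hw hle hfw).2

lemma isChain_ne_cons {j : I} {w : List I} :
    (j :: w).IsChain (· ≠ ·) ↔ w.head? ≠ some j ∧ w.IsChain (· ≠ ·) := by
  rw [List.isChain_cons]
  cases w <;> simp [eq_comm]

variable [DecidableEq I]

lemma leadsWith_none_single_nil : LeadsWith none (Pi.single [] 1 : MagnusSeries I) := by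
  refine ⟨[], List.isChain_nil, rfl, by simp, fun v _ _ hv => ?_⟩
  have hv_nil : v = [] := by
    by_contra hne
    exact hv (Pi.single_eq_of_ne hne _)
  simp [hv_nil]

lemma val_inv_oneAddVar (i : I) : (↑(oneAddVar i)⁻¹ : SeriesEnd I) = invOneAddVar i := rfl

lemma oneAddVar_zpow_apply_of_head?_ne {j : I} {w : List I} (hw : w.head? ≠ some j) (e : ℤ)
    (f : MagnusSeries I) : (↑(oneAddVar j ^ e) : SeriesEnd I) f w = f w := by
  induction e using Int.induction_on generalizing f with
  | zero => simp
  | succ e ih =>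
    rw [zpow_add_one, Units.val_mul, Module.End.mul_apply, ih]
    cases w <;> simp_all [val_oneAddVar]
  | pred e ih =>
    rw [zpow_sub_one, Units.val_mul, Module.End.mul_apply, ih]
    cases w <;> simp_all [val_inv_oneAddVar]

lemma oneAddVar_zpow_apply_cons {j : I} {w : List I} (hw : w.head? ≠ some j) (e : ℤ)
    (f : MagnusSeries I) :
    (↑(oneAddVar j ^ e) : SeriesEnd I) f (j :: w) = f (j :: w) + e * f w := by
  induction e using Int.induction_on generalizing f with
  | zero => simp
  | succ e ih =>
    have hstep := oneAddVar_zpow_apply_of_head?_ne hw 1 f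
    rw [zpow_one] at hstep
    rw [zpow_add_one, Units.val_mul, Module.End.mul_apply, ih, hstep, val_oneAddVar]
    simp only [LinearMap.add_apply, Module.End.one_apply, Pi.add_apply, mulVar_cons, if_true]
    ring
  | pred e ih =>
    have hstep := oneAddVar_zpow_apply_of_head?_ne hw (-1) f
    rw [zpow_neg_one, val_inv_oneAddVar] at hstep
    rw [zpow_sub_one, Units.val_mul, Module.End.mul_apply, ih, val_inv_oneAddVar, hstep,
      invOneAddVar_cons, hstep, if_pos rfl]
    ring

lemma LeadsWith.oneAddVar_zpow {o : Option I} {f : MagnusSeries I} (h : LeadsWith o f) {j : I}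
    (ho : o ≠ some j) {e : ℤ} (he : e ≠ 0) :
    LeadsWith (some j) ((↑(oneAddVar j ^ e) : SeriesEnd I) f) := by
  obtain ⟨w, hw, rfl, hfw, hmax⟩ := h
  have hzero : ∀ v : List I, v.IsChain (· ≠ ·) → w.length < v.length → f v = 0 := fun v hv hlt => by
    by_contra hfv
    exact hlt.ne' (hmax v hv hlt.le hfv).1
  have hjw : (j :: w).IsChain (· ≠ ·) := isChain_ne_cons.2 ⟨ho, hw⟩
  refine ⟨j :: w, hjw, rfl, ?_, fun v hv hlen hne => ?_⟩
  · rw [oneAddVar_zpow_apply_cons ho, hzero _ hjw (by simp), zero_add]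
    exact mul_ne_zero he hfw
  · rw [List.length_cons, Nat.succ_le_iff] at hlen
    have hvj : v.head? = some j := by
      by_contra hvj
      rw [oneAddVar_zpow_apply_of_head?_ne hvj] at hne
      exact hne (hzero v hv hlen)
    obtain ⟨u, rfl⟩ := List.head?_eq_some_iff.1 hvj
    obtain ⟨huj, hu⟩ := isChain_ne_cons.1 hv
    rw [oneAddVar_zpow_apply_cons huj, hzero _ hv hlen, zero_add] at hne
    have hulen := (hmax u hu (by simpa [Nat.lt_succ_iff] using hlen) (right_ne_zero_of_mul hne)).1
    exact ⟨by simp [hulen], rfl⟩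

/-- The Magnus representation on the free product of infinite cyclic groups. -/
noncomputable def magnusCoprod : Monoid.CoprodI (fun _ : I => FreeGroup Unit) →* (SeriesEnd I)ˣ :=
  Monoid.CoprodI.lift fun i => FreeGroup.lift fun _ => oneAddVar i

lemma magnusCoprod_freeGroupEquivCoprodI (g : FreeGroup I) :
    magnusCoprod (freeGroupEquivCoprodI g) = magnus g := by
  have hcomp : magnusCoprod.comp (freeGroupEquivCoprodI (ι := I)).toMonoidHom = magnus := by
    ext1 i
    simp [magnusCoprod, magnus]
  exact DFunLike.congr_fun hcomp g

lemma LeadsWith.magnusCoprod_of {o : Option I} {f : MagnusSeries I} (h : LeadsWith o f) {j : I}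
    (ho : o ≠ some j) {x : FreeGroup Unit} (hx : x ≠ 1) :
    LeadsWith (some j)
      ((magnusCoprod (Monoid.CoprodI.of (i := j) x) : SeriesEnd I) f) := by
  obtain ⟨e, rfl⟩ := freeGroupUnitEquivInt.symm.surjective x
  have he : e ≠ 0 := by
    rintro rfl
    exact hx rfl
  have hval : magnusCoprod (Monoid.CoprodI.of (i := j) (freeGroupUnitEquivInt.symm e)) =
      oneAddVar j ^ e := by
    simp [magnusCoprod, freeGroupUnitEquivInt]
  rw [hval]
  exact h.oneAddVar_zpow ho he

lemma LeadsWith.magnusCoprod_neWord {i j : I}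
    (w : Monoid.CoprodI.NeWord (fun _ : I => FreeGroup Unit) i j)
    {o : Option I} {f : MagnusSeries I} (h : LeadsWith o f) (ho : o ≠ some j) :
    LeadsWith (some i) ((magnusCoprod w.prod : SeriesEnd I) f) := by
  induction w generalizing o f with
  | singleton x hx => simpa using h.magnusCoprod_of ho hx
  | append w₁ hne w₂ ih₁ ih₂ =>
    simpa using ih₁ (ih₂ h ho) (by simpa using hne.symm)

theorem magnusCoeff_ne_zero {g : FreeGroup I} (hg : g ≠ 1) : magnusCoeff g ≠ 0 := by
  have hword : Monoid.CoprodI.Word.equiv (freeGroupEquivCoprodI g) ≠ .empty := fun h =>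
    hg ((map_eq_one_iff _ (MulEquiv.injective _)).1
      (((Equiv.eq_symm_apply _).2 h).trans Monoid.CoprodI.Word.prod_empty))
  obtain ⟨i, j, w, hw⟩ := Monoid.CoprodI.NeWord.of_word _ hword
  have hprod : w.prod = freeGroupEquivCoprodI g := by
    rw [Monoid.CoprodI.NeWord.prod, hw]
    exact Monoid.CoprodI.Word.equiv.symm_apply_apply _
  intro hzero
  have hlead := leadsWith_none_single_nil.magnusCoprod_neWord w (by simp)
  rw [hprod, magnusCoprod_freeGroupEquivCoprodI, sub_eq_zero.1 hzero] at hlead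
  exact Option.some_ne_none i (hlead.unique leadsWith_none_single_nil)

end Faithful

section MagnusCone

variable {I : Type*} [LinearOrder I]

/-- Words are compared by length first and then lexicographically. -/
def shortlexKey (w : List I) : ℕ ×ₗ List I := toLex (w.length, w)

lemma shortlexKey_lt_iff {v w : List I} :
    shortlexKey v < shortlexKey w ↔ v.length < w.length ∨ v.length = w.length ∧ v < w :=
  Prod.Lex.toLex_lt_toLex

lemma length_le_of_shortlexKey_le {v w : List I} (h : shortlexKey v ≤ shortlexKey w) :
    v.length ≤ w.length := Prod.Lex.monotone_fst _ _ h

/-- The term of `f` at `w` is positive and all earlier terms of `f` vanish. -/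
def HasPosLeadingTerm (f : MagnusSeries I) (w : List I) : Prop :=
  0 < f w ∧ ∀ v, shortlexKey v < shortlexKey w → f v = 0

namespace HasPosLeadingTerm

variable {f g : MagnusSeries I} {v w : List I}

lemma mem_orderGE (h : HasPosLeadingTerm f w) : f ∈ orderGE I w.length := fun v hv =>
  h.2 v (shortlexKey_lt_iff.2 (Or.inl hv))

lemma congr (h : HasPosLeadingTerm f w) (hfg : g - f ∈ orderGE I (w.length + 1)) :
    HasPosLeadingTerm g w := by
  have heq : ∀ v : List I, shortlexKey v ≤ shortlexKey w → g v = f v := fun v hv =>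
    sub_eq_zero.1 (hfg v (Nat.lt_succ_of_le (length_le_of_shortlexKey_le hv)))
  exact ⟨(heq w le_rfl).symm ▸ h.1, fun v hv => (heq v hv.le).trans (h.2 v hv)⟩

lemma add_of_lt (hf : HasPosLeadingTerm f v) (hg : HasPosLeadingTerm g w)
    (hlt : shortlexKey v < shortlexKey w) : HasPosLeadingTerm (f + g) v := by
  refine ⟨?_, fun u hu => ?_⟩
  · simpa [hg.2 v hlt] using hf.1
  · simp [hf.2 u hu, hg.2 u (hu.trans hlt)]

lemma relabel {J : Type*} [LinearOrder J] {π : I → J} (hπ : StrictMono π)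
    (h : HasPosLeadingTerm f w) : HasPosLeadingTerm (relabel π f) (w.map π) := by
  have hmap : StrictMono (List.map π) := fun _ _ => List.map_lt fun _ _ hij => hπ hij
  refine ⟨(relabel_apply_map hπ.injective f w).symm ▸ h.1, fun v hv => ?_⟩
  by_cases hrange : v ∈ Set.range (List.map π)
  · obtain ⟨u, rfl⟩ := hrange
    rw [relabel_apply_map hπ.injective]
    refine h.2 u (shortlexKey_lt_iff.2 ?_)
    simpa only [List.length_map, hmap.lt_iff_lt] using shortlexKey_lt_iff.1 hv
  · exact relabel_apply_of_notMem hrange f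

end HasPosLeadingTerm

/-- The first nonzero term of `f` exists and is positive. -/
def LexPos (f : MagnusSeries I) : Prop := ∃ w, HasPosLeadingTerm f w

lemma LexPos.add {f g : MagnusSeries I} (hf : LexPos f) (hg : LexPos g) : LexPos (f + g) := by
  obtain ⟨v, hv⟩ := hf
  obtain ⟨w, hw⟩ := hg
  rcases lt_trichotomy (shortlexKey v) (shortlexKey w) with hlt | heq | hgt
  · exact ⟨v, hv.add_of_lt hw hlt⟩
  · obtain rfl : v = w := congrArg (fun x => (ofLex x).2) heq
    exact ⟨v, add_pos hv.1 hw.1, fun u hu => by simp [hv.2 u hu, hw.2 u hu]⟩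
  · exact ⟨w, add_comm f g ▸ hw.add_of_lt hv hgt⟩

lemma LexPos.unipotent_apply {f : MagnusSeries I} (hf : LexPos f) {T : (SeriesEnd I)ˣ}
    (hT : T ∈ unipotent I) : LexPos ((T : SeriesEnd I) f) := by
  obtain ⟨w, hw⟩ := hf
  exact ⟨w, hw.congr (hT _ f hw.mem_orderGE)⟩

lemma lexPos_or_lexPos_neg {f : MagnusSeries I} (hf : f ≠ 0)
    (hfin : ∀ n, {w : List I | w.length < n ∧ f w ≠ 0}.Finite) : LexPos f ∨ LexPos (-f) := by
  obtain ⟨u, hu⟩ := Function.ne_iff.1 hf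
  obtain ⟨w, ⟨hwu, hw⟩, hmin⟩ := Set.exists_min_image _ shortlexKey (hfin (u.length + 1))
    ⟨u, Nat.lt_succ_self _, hu⟩
  have hzero : ∀ v, shortlexKey v < shortlexKey w → f v = 0 := fun v hv => by
    by_contra hfv
    exact (hmin v ⟨(length_le_of_shortlexKey_le hv.le).trans_lt hwu, hfv⟩).not_gt hv
  rcases lt_or_gt_of_ne hw with hneg | hpos
  · exact Or.inr ⟨w, by simpa using hneg, fun v hv => by simp [hzero v hv]⟩
  · exact Or.inl ⟨w, hpos, hzero⟩

/-- The positive cone of the Magnus ordering of a free group. -/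
def magnusCone (I : Type*) [LinearOrder I] : Set (FreeGroup I) := {g | LexPos (magnusCoeff g)}

theorem mapsTo_magnusCone {ψ : FreeGroup I →* FreeGroup I} {π : I → I}
    (hψ : ∀ i, IsConj (of (π i)) (ψ (of i))) (hπ : StrictMono π) :
    Set.MapsTo ψ (magnusCone I) (magnusCone I) := by
  rintro g ⟨w, hw⟩
  refine ⟨w.map π, (hw.relabel hπ).congr ?_⟩
  rw [List.length_map]
  exact magnusCoeff_map_conj_sub_mem_orderGE hψ hπ.injective hw.mem_orderGE

theorem isPositiveCone_magnusCone : IsPositiveCone (magnusCone I) where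
  one_notMem := by
    rintro ⟨w, hw, -⟩
    simp [magnusCoeff_one] at hw
  mul_mem {a b} ha hb := by
    change LexPos (magnusCoeff (a * b))
    rw [magnusCoeff_mul]
    exact LexPos.add ha (LexPos.unipotent_apply hb (magnus_mem_unipotent a))
  mem_or_inv_mem {a} ha := by
    have hinv : magnusCoeff a⁻¹ = (magnus a⁻¹ : SeriesEnd I) (-magnusCoeff a) := by
      rw [map_neg, ← add_eq_zero_iff_eq_neg, ← magnusCoeff_mul, inv_mul_cancel, magnusCoeff_one]
    refine (lexPos_or_lexPos_neg (magnusCoeff_ne_zero ha) (finite_magnusCoeff_support a)).imp_right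
      fun hneg => ?_
    change LexPos (magnusCoeff a⁻¹)
    rw [hinv]
    exact hneg.unipotent_apply (magnus_mem_unipotent a⁻¹)
  conj_mem c ha := mapsTo_magnusCone (ψ := (MulAut.conj c).toMonoidHom)
    (fun i => isConj_iff.2 ⟨c, rfl⟩) strictMono_id ha

end MagnusCone

end MagnusSeries

open MagnusSeries

section WeightedConjPerm

variable {I A : Type*} [CommGroup A]

/-- `φ` sends each generator `x_k` to a conjugate of `x_{τ k}` by an element of `ε`-weight `a k`,
and generators in the same orbit of `τ` have the same `ε`-weight. -/
structure IsWeightedConjPerm (ε : FreeGroup I →* A) (φ : Monoid.End (FreeGroup I))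
    (τ : Equiv.Perm I) (a : I → A) : Prop where
  weight_of_perm : ∀ k, ε (of (τ k)) = ε (of k)
  exists_conj : ∀ k, ∃ c, ε c = a k ∧ φ (of k) = c * of (τ k) * c⁻¹

namespace IsWeightedConjPerm

variable {ε : FreeGroup I →* A} {φ φ' : Monoid.End (FreeGroup I)} {τ τ' : Equiv.Perm I}
  {a a' : I → A}

lemma isConj (h : IsWeightedConjPerm ε φ τ a) (k : I) : IsConj (of (τ k)) (φ (of k)) := by
  obtain ⟨c, -, hc⟩ := h.exists_conj k
  exact isConj_iff.2 ⟨c, hc.symm⟩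

lemma weight_map (h : IsWeightedConjPerm ε φ τ a) (g : FreeGroup I) : ε (φ g) = ε g := by
  have hcomp : ε.comp φ = ε := by
    ext k
    obtain ⟨c, -, hc⟩ := h.exists_conj k
    change ε (φ (of k)) = ε (of k)
    rw [hc]
    simp [h.weight_of_perm]
  exact DFunLike.congr_fun hcomp g

lemma mul (h : IsWeightedConjPerm ε φ τ a) (h' : IsWeightedConjPerm ε φ' τ' a') :
    IsWeightedConjPerm ε (φ * φ') (τ * τ') (a' * a ∘ τ') where
  weight_of_perm k := (h.weight_of_perm _).trans (h'.weight_of_perm k)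
  exists_conj k := by
    obtain ⟨c', hc', hφ'⟩ := h'.exists_conj k
    obtain ⟨c, hc, hφ⟩ := h.exists_conj (τ' k)
    refine ⟨φ c' * c, by simp [h.weight_map, hc, hc'], ?_⟩
    rw [Monoid.End.coe_mul, Function.comp_apply, hφ', _root_.map_mul, _root_.map_mul, hφ,
      _root_.map_inv]
    simp only [Equiv.Perm.mul_apply]
    group

lemma pow (h : IsWeightedConjPerm ε φ τ 1) (n : ℕ) : IsWeightedConjPerm ε (φ ^ n) (τ ^ n) 1 := by
  induction n with
  | zero => exact ⟨fun _ => rfl, fun k => ⟨1, by simp⟩⟩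
  | succ n ih => simpa [pow_succ] using ih.mul h

end IsWeightedConjPerm

end WeightedConjPerm

section Braid

open Multiplicative (ofAdd)

/-- The total exponent of `x₁` in an element of `F₃`. -/
def exponentX1 : FreeGroup (Fin 3) →* Multiplicative ℤ := FreeGroup.lift ![ofAdd 1, 1, 1]

lemma isWeightedConjPerm_artinS2 :
    IsWeightedConjPerm exponentX1 artinS2 (Equiv.swap 1 2) 1 where
  weight_of_perm := by decide
  exists_conj := by
    intro k
    fin_cases k
    · exact ⟨1, rfl, rfl⟩
    · exact ⟨of 1, rfl, rfl⟩
    · exact ⟨1, rfl, rfl⟩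

lemma isWeightedConjPerm_artinS2Inv :
    IsWeightedConjPerm exponentX1 artinS2Inv (Equiv.swap 1 2) 1 where
  weight_of_perm := by decide
  exists_conj := by
    intro k
    fin_cases k
    · exact ⟨1, rfl, rfl⟩
    · exact ⟨1, rfl, rfl⟩
    · exact ⟨(of 2)⁻¹, rfl, rfl⟩

lemma isWeightedConjPerm_artinS1_mul_self :
    IsWeightedConjPerm exponentX1 (artinS1 * artinS1) 1 ![ofAdd 1, ofAdd 1, 1] where
  weight_of_perm _ := rfl
  exists_conj := by
    intro k
    fin_cases k
    · refine ⟨of 0 * of 1, rfl, ?_⟩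
      calc artinS1 (artinS1 (of 0)) = artinS1 (of 0 * of 1 * (of 0)⁻¹) := rfl
        _ = of 0 * of 1 * (of 0)⁻¹ * of 0 * (of 0 * of 1 * (of 0)⁻¹)⁻¹ := rfl
        _ = of 0 * of 1 * of 0 * (of 0 * of 1)⁻¹ := by group
    · exact ⟨of 0, rfl, rfl⟩
    · exact ⟨1, rfl, rfl⟩

lemma exists_isWeightedConjPerm_braidAction (n : ℤ) :
    ∃ τ : Equiv.Perm (Fin 3), (τ = 1 ∨ τ = Equiv.swap 1 2) ∧
      IsWeightedConjPerm exponentX1 (braidAction n) τ ![ofAdd 1, ofAdd 1, 1] := by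
  obtain ⟨m, hm⟩ : ∃ m : ℕ, IsWeightedConjPerm exponentX1
      (if 0 ≤ n then artinS2 ^ n.toNat else artinS2Inv ^ (-n).toNat) (Equiv.swap 1 2 ^ m) 1 := by
    split_ifs
    exacts [⟨_, isWeightedConjPerm_artinS2.pow _⟩, ⟨_, isWeightedConjPerm_artinS2Inv.pow _⟩]
  refine ⟨Equiv.swap 1 2 ^ m, ?_, ?_⟩
  · rcases m.even_or_odd' with ⟨r, rfl | rfl⟩
    · exact Or.inl (by simp [pow_mul, pow_two])
    · exact Or.inr (by simp [pow_succ, pow_mul])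
  · simpa [braidAction, mul_assoc] using hm.mul isWeightedConjPerm_artinS1_mul_self

/-- The action of `ℤ` on the free group on `y_k`, `k ∈ ℤ`, in which `m` shifts indices by `2m`. -/
def evenShift : Multiplicative ℤ →* MulAut (FreeGroup ℤ) :=
  MonoidHom.mk' (fun m => freeGroupCongr (Equiv.addRight (2 * m.toAdd))) fun m m' => by
    refine MulEquiv.toMonoidHom_injective (FreeGroup.ext_hom _ _ fun k => ?_)
    simp [mul_add, add_left_comm, add_comm]

lemma evenShift_of (m : Multiplicative ℤ) (k : ℤ) :
    evenShift m (of k) = of (k + 2 * m.toAdd) := by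
  simp [evenShift]

lemma mapsTo_evenShift (m : Multiplicative ℤ) :
    Set.MapsTo (evenShift m) (magnusCone ℤ) (magnusCone ℤ) :=
  mapsTo_magnusCone (ψ := (evenShift m).toMonoidHom) (π := (· + 2 * m.toAdd))
    (fun k => (evenShift_of m k).symm ▸ IsConj.refl _) fun _ _ h => by simpa using h

/-- Unrolls `F₃` along the exponent of `x₁`: the kernel of `exponentX1` is free on the conjugates of
`x₂` and `x₃` by powers of `x₁`, and these are interleaved as `x₁ᵐ x₂ x₁⁻ᵐ ↦ y_{2m+1}` and
`x₁ᵐ x₃ x₁⁻ᵐ ↦ y_{2m}`. -/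
def unroll : FreeGroup (Fin 3) →* FreeGroup ℤ ⋊[evenShift] Multiplicative ℤ :=
  FreeGroup.lift ![.inr (ofAdd 1), .inl (of 1), .inl (of 0)]

/-- The element of `F₃` that `unroll` sends to the generator `y_k`. -/
def rolledGen (k : ℤ) : FreeGroup (Fin 3) :=
  MulAut.conj (of 0 ^ (k / 2)) (of (if Even k then 2 else 1))

lemma rolledGen_add_two_mul (k m : ℤ) :
    rolledGen (k + 2 * m) = MulAut.conj (of 0 ^ m) (rolledGen k) := by
  have hdiv : (k + 2 * m) / 2 = m + k / 2 := by omega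
  have heven : Even (k + 2 * m) ↔ Even k := by simp [Int.even_add]
  rw [rolledGen, rolledGen, hdiv, zpow_add, _root_.map_mul, MulAut.mul_apply]
  simp only [heven]

/-- The inverse of `unroll`. -/
def roll : FreeGroup ℤ ⋊[evenShift] Multiplicative ℤ →* FreeGroup (Fin 3) :=
  SemidirectProduct.lift (FreeGroup.lift rolledGen) (zpowersHom _ (of 0)) fun m => by
    ext k
    simp [evenShift_of, rolledGen_add_two_mul]

lemma roll_unroll (g : FreeGroup (Fin 3)) : roll (unroll g) = g := by
  have hcomp : roll.comp unroll = MonoidHom.id _ := by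
    ext k
    fin_cases k <;> simp [roll, unroll, rolledGen]
  exact DFunLike.congr_fun hcomp g

lemma unroll_injective : Function.Injective unroll :=
  Function.LeftInverse.injective roll_unroll

lemma right_unroll (g : FreeGroup (Fin 3)) : (unroll g).right = exponentX1 g := by
  have hcomp : SemidirectProduct.rightHom.comp unroll = exponentX1 := by
    ext k
    fin_cases k <;> simp [unroll, exponentX1]
  exact DFunLike.congr_fun hcomp g

lemma unroll_rolledGen (k : ℤ) : unroll (rolledGen k) = .inl (of k) := by
  have hzero : unroll (of 0) = .inr (ofAdd 1) := FreeGroup.lift_apply_of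
  have hbase : unroll (of (if Even k then 2 else 1)) = .inl (of (k % 2)) := by
    split_ifs with hk
    · exact (Int.even_iff.1 hk).symm ▸ FreeGroup.lift_apply_of
    · exact (Int.not_even_iff.1 hk).symm ▸ FreeGroup.lift_apply_of
  rw [rolledGen, MulAut.conj_apply, _root_.map_mul, _root_.map_mul, _root_.map_inv, map_zpow,
    hzero, hbase, semidirect_conj_inl]
  simp [← map_zpow, evenShift_of, Int.emod_add_mul_ediv]

lemma exponentX1_roll (x : FreeGroup ℤ ⋊[evenShift] Multiplicative ℤ) :
    exponentX1 (roll x) = x.right := by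
  have hcomp : exponentX1.comp roll = SemidirectProduct.rightHom := by
    refine SemidirectProduct.hom_ext ?_ ?_
    · ext k
      simp [roll, ← right_unroll, unroll_rolledGen]
    · ext
      simp [roll, exponentX1]
  exact DFunLike.congr_fun hcomp x

/- `φ` exchanges the two interleaved families up to conjugation, and the weights turn this exchange
into the order-preserving shift `k ↦ k + 1`. -/
lemma exists_unroll_map_rolledGen {φ : Monoid.End (FreeGroup (Fin 3))}
    (hφ : IsWeightedConjPerm exponentX1 φ (Equiv.swap 1 2) ![ofAdd 1, ofAdd 1, 1]) (k : ℤ) :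
    ∃ y, IsConj (of (k + 1)) y ∧ unroll (φ (rolledGen k)) = .inl y := by
  obtain ⟨c, j, l, e, hφc, hc, hj, hl⟩ : ∃ (c : FreeGroup (Fin 3)) (j : Fin 3) (l e : ℤ),
      φ (of (if Even k then 2 else 1)) = c * of j * c⁻¹ ∧ exponentX1 c = ofAdd e ∧
      unroll (of j) = .inl (of l) ∧ l + 2 * (k / 2 + e) = k + 1 := by
    split_ifs with hk
    · obtain ⟨c, hc, hφc⟩ := hφ.exists_conj 2
      exact ⟨c, 1, 1, 0, hφc, hc, FreeGroup.lift_apply_of, by grind⟩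
    · obtain ⟨c, hc, hφc⟩ := hφ.exists_conj 1
      exact ⟨c, 2, 0, 1, hφc, hc, FreeGroup.lift_apply_of, by grind⟩
  set d : FreeGroup (Fin 3) := φ (of 0) ^ (k / 2) * c with hd
  have hφk : φ (rolledGen k) = d * of j * d⁻¹ := by
    rw [rolledGen, MulAut.conj_apply, _root_.map_mul, _root_.map_mul, _root_.map_inv, map_zpow, hφc,
      hd]
    group
  have hright : (unroll d).right = ofAdd (k / 2 + e) := by
    have hzero : exponentX1 (of 0) = ofAdd 1 := FreeGroup.lift_apply_of
    rw [right_unroll, hd, _root_.map_mul, map_zpow, hφ.weight_map, hzero, hc]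
    simp [ofAdd_add, ← ofAdd_zsmul]
  refine ⟨(unroll d).left * of (k + 1) * (unroll d).left⁻¹, isConj_iff.2 ⟨_, rfl⟩, ?_⟩
  rw [hφk, _root_.map_mul, _root_.map_mul, _root_.map_inv, hj, semidirect_conj_inl, hright,
    evenShift_of, toAdd_ofAdd, hl]

theorem exists_invariant_cone_of_swap {φ : Monoid.End (FreeGroup (Fin 3))}
    (hφ : IsWeightedConjPerm exponentX1 φ (Equiv.swap 1 2) ![ofAdd 1, ofAdd 1, 1]) :
    ∃ P, IsPositiveCone P ∧ Set.MapsTo φ P P := by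
  choose y hconj hunroll using exists_unroll_map_rolledGen hφ
  set Φ := unroll.comp (MonoidHom.comp φ roll)
  set ψ : FreeGroup ℤ →* FreeGroup ℤ := FreeGroup.lift y with hψ
  have hright : ∀ x, (Φ x).right = x.right := fun x =>
    (right_unroll _).trans ((hφ.weight_map _).trans (exponentX1_roll x))
  have hleft : Φ.comp SemidirectProduct.inl = SemidirectProduct.inl.comp ψ := by
    ext1 k
    have hroll : roll (SemidirectProduct.inl (of k)) = rolledGen k := by simp [roll]
    change unroll (φ (roll (SemidirectProduct.inl (of k)))) = SemidirectProduct.inl (ψ (of k))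
    rw [hroll, hunroll, hψ, FreeGroup.lift_apply_of]
  have hψ_cone : Set.MapsTo ψ (magnusCone ℤ) (magnusCone ℤ) :=
    mapsTo_magnusCone (π := (· + 1)) (fun k => by simpa [hψ] using hconj k)
      fun _ _ h => by simpa using h
  refine ⟨unroll ⁻¹' semidirectLexCone evenShift (magnusCone ℤ) (Set.Ioi 1),
    (isPositiveCone_semidirectLexCone isPositiveCone_magnusCone isPositiveCone_Ioi_one
      mapsTo_evenShift).comap unroll_injective, fun g hg => ?_⟩
  have hcone : unroll (φ (roll (unroll g))) ∈
      semidirectLexCone evenShift (magnusCone ℤ) (Set.Ioi 1) :=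
    mapsTo_semidirectLexCone hright (DFunLike.congr_fun hleft) hψ_cone hg
  rwa [roll_unroll] at hcone

end Braid

/-- For every integer `n`, the braid `σ₁² σ₂ⁿ ∈ B₃` is order-preserving: the induced
automorphism of `F₃` preserves some bi-ordering of `F₃`. -/
theorem stmt16 (n : ℤ) :
    ∃ lt : FreeGroup (Fin 3) → FreeGroup (Fin 3) → Prop,
      (∀ a, ¬ lt a a) ∧
      (∀ a b c, lt a b → lt b c → lt a c) ∧
      (∀ a b, a ≠ b → lt a b ∨ lt b a) ∧
      (∀ a b c, lt a b → lt (c * a) (c * b)) ∧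
      (∀ a b c, lt a b → lt (a * c) (b * c)) ∧
      (∀ a b, lt a b ↔ lt (braidAction n a) (braidAction n b)) := by
  obtain ⟨P, hP, hmaps⟩ : ∃ P, IsPositiveCone P ∧ Set.MapsTo (braidAction n) P P := by
    obtain ⟨τ, rfl | rfl, hτ⟩ := exists_isWeightedConjPerm_braidAction n
    · exact ⟨magnusCone _, isPositiveCone_magnusCone, mapsTo_magnusCone hτ.isConj strictMono_id⟩
    · exact exists_invariant_cone_of_swap hτ
  exact hP.exists_invariant_biorder hmaps
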